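/- Let R be a noetherian regular ring of prime characteristic p, M a finitely generated R-module with an injective map β: M → F(M) (a root of the F-finite F-module M_∞ = colim F^e(M)), and f1,…,fc ∈ R. Then Supp(H^0(K^•(f1,…,fc; M_∞))), i.e. Supp(∩_{j=1}^c ker(f_j : M_∞ → M_∞)), is a Zariski-closed subset of Spec R. -/

import Mathlib

open CategoryTheory IsLocalRing

/-- A noetherian local ring is regular if its Krull dimension equals the dimension of its
cotangent space over the residue field. -/
def IsRegularLocalRingStmt (A : Type u) [CommRing A] [IsLocalRing A] : Prop :=
  ringKrullDim A = (Module.finrank (ResidueField A) (CotangentSpace A) : WithBot (WithTop ℕ))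

/-- A commutative ring is regular if it is noetherian and all of its localizations at
primes are regular local rings. -/
def IsRegularRingStmt (R : Type u) [CommRing R] : Prop :=
  IsNoetherianRing R ∧
    ∀ (P : Ideal R) [P.IsPrime], IsRegularLocalRingStmt (Localization.AtPrime P)

/-- Iterates of the Peskine–Szpiro (Frobenius) functor `F(M) = R^{(1)} ⊗_R M`. -/
noncomputable def Fpow (R : Type) [CommRing R] (p : ℕ) [Fact p.Prime] [CharP R p] :
    ℕ → ModuleCat R ⥤ ModuleCat R
  | 0 => Functor.id _
  | e + 1 => ModuleCat.extendScalars (frobenius R p) ⋙ Fpow R p e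

/-!
Frobenius is flat on a regular local ring (Kunz), by induction on the dimension: cut by an `x` in
the maximal ideal that lies outside its square and outside all minimal primes. The Frobenius map of
`A / x` factors as `A / x → A / x ^ p → A / x`, and `A / x ^ p` is filtered by copies of `A / x`, so
`A / x → A / x ^ p` is flat if that Frobenius map is; the local criterion lifts this to `A`.

Let `H(N)` be the submodule of `N` annihilated by all `f j`. By flatness of Frobenius, `s ^ p ^ e`
annihilates `H(F^e M)` whenever `s` annihilates `H(M)`. Since `H(M_∞)` is the union of the
`H(F^e M)` and contains `H(M)`, the two have the same support, and `H(M)` is finitely generated.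
-/

open TensorProduct

universe u

theorem flat_of_exact {A M₁ M₂ M₃ : Type*} [CommRing A] [AddCommGroup M₁] [AddCommGroup M₂]
    [AddCommGroup M₃] [Module A M₁] [Module A M₂] [Module A M₃] [Module.Flat A M₁]
    [Module.Flat A M₃] {f : M₁ →ₗ[A] M₂} {g : M₂ →ₗ[A] M₃} (hf : Function.Injective f)
    (hg : Function.Surjective g) (hfg : Function.Exact f g) : Module.Flat A M₂ := by
  rw [Module.Flat.iff_lTensor_injective']
  intro I
  rw [injective_iff_map_eq_zero]
  intro z hz
  have hgz : g.rTensor I z = 0 := by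
    apply Module.Flat.lTensor_preserves_injective_linearMap (M := M₃) I.subtype
      I.injective_subtype
    rw [← LinearMap.comp_apply, LinearMap.lTensor_comp_rTensor, ← LinearMap.rTensor_comp_lTensor,
      LinearMap.comp_apply, hz, map_zero, map_zero]
  obtain ⟨w, rfl⟩ := (rTensor_exact I hfg hg z).mp hgz
  have hw : I.subtype.lTensor M₁ w = 0 := by
    apply Module.Flat.rTensor_preserves_injective_linearMap (M := A) f hf
    rw [← LinearMap.comp_apply, LinearMap.rTensor_comp_lTensor, ← LinearMap.lTensor_comp_rTensor,
      LinearMap.comp_apply, hz, map_zero]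
  have hI := Module.Flat.lTensor_preserves_injective_linearMap (M := M₁) I.subtype
    I.injective_subtype
  rw [(injective_iff_map_eq_zero _).mp hI w hw, map_zero]

theorem flat_quotient_range_pow {A M : Type*} [CommRing A] [AddCommGroup M] [Module A M]
    (y : Module.End A M) [Module.Flat A (M ⧸ LinearMap.range y)] {n : ℕ}
    (hy : ∀ i < n, LinearMap.ker (y ^ i) ≤ LinearMap.range y) :
    Module.Flat A (M ⧸ LinearMap.range (y ^ n)) := by
  induction n with
  | zero =>
    have : Subsingleton (M ⧸ LinearMap.range (y ^ 0)) := by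
      rw [Submodule.Quotient.subsingleton_iff, pow_zero]
      exact LinearMap.range_id
    infer_instance
  | succ n ih =>
    have := ih fun i hi => hy i (hi.trans n.lt_succ_self)
    have hsub : LinearMap.range y ≤ (LinearMap.range (y ^ (n + 1))).comap (y ^ n) := by
      rintro _ ⟨m, rfl⟩
      exact ⟨m, by rw [pow_succ, Module.End.mul_apply]⟩
    have hle : LinearMap.range (y ^ (n + 1)) ≤ LinearMap.range (y ^ n) := by
      rw [pow_succ]
      exact LinearMap.range_comp_le_range _ _
    let α := Submodule.mapQ _ _ (y ^ n) hsub
    let γ := Submodule.factor hle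
    have hα : Function.Injective α := by
      rw [← LinearMap.ker_eq_bot, Submodule.ker_mapQ, ← le_bot_iff, Submodule.map_le_iff_le_comap]
      rintro m ⟨m', hm'⟩
      have hker : m - y m' ∈ LinearMap.ker (y ^ n) := by
        rw [LinearMap.mem_ker, map_sub, ← hm', pow_succ, Module.End.mul_apply, sub_self]
      rw [Submodule.comap_bot, Submodule.ker_mkQ]
      simpa using add_mem (hy n n.lt_succ_self hker) (LinearMap.mem_range_self y m')
    refine flat_of_exact (f := α) (g := γ) hα (Submodule.factor_surjective hle) ?_
    rw [LinearMap.exact_iff, Submodule.range_mapQ]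
    exact Submodule.ker_mapQ _ _ LinearMap.id hle

theorem flat_of_flat_quotient_of_pow_eq_zero {A C : Type*} [CommRing A] [CommRing C] [Algebra A C]
    {y : C} [Module.Flat A (C ⧸ Ideal.span {y})] {n : ℕ} (hn : y ^ n = 0)
    (hy : ∀ i < n, ∀ c, y ^ i * c = 0 → y ∣ c) : Module.Flat A C := by
  let μ := Algebra.lmul A C y
  have hμ (i : ℕ) (c : C) : (μ ^ i) c = y ^ i * c := by
    rw [← map_pow, Algebra.coe_lmul_eq_mul, LinearMap.mul_apply']
  have hrange : LinearMap.range μ = (Ideal.span {y}).restrictScalars A := by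
    ext c
    rw [LinearMap.mem_range, Submodule.restrictScalars_mem, Ideal.mem_span_singleton]
    exact exists_congr fun _ => eq_comm
  have : Module.Flat A (C ⧸ LinearMap.range μ) := by
    rw [hrange]
    exact .of_linearEquiv (Submodule.Quotient.restrictScalarsEquiv A (Ideal.span {y}))
  have hflat : Module.Flat A (C ⧸ LinearMap.range (μ ^ n)) := by
    refine flat_quotient_range_pow μ fun i hi c hc => ?_
    obtain ⟨d, rfl⟩ := hy i hi c (by rwa [← hμ])
    exact ⟨d, rfl⟩
  have hbot : LinearMap.range (μ ^ n) = ⊥ := by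
    rw [LinearMap.range_eq_bot, ← map_pow, hn, map_zero]
  exact .of_linearEquiv (Submodule.quotEquivOfEqBot _ hbot).symm

theorem lTensor_injective_of_flat_baseChange {A C N M M' : Type*} [CommRing A] [CommRing C]
    [Algebra A C] [AddCommGroup N] [Module A N] [Module.Flat C (C ⊗[A] N)]
    [AddCommGroup M] [Module A M] [Module C M] [IsScalarTower A C M]
    [AddCommGroup M'] [Module A M'] [Module C M'] [IsScalarTower A C M']
    (i : M →ₗ[C] M') (hi : Function.Injective i) :
    Function.Injective ((i.restrictScalars A).lTensor N) := by
  let φ := AlgebraTensorModule.cancelBaseChange A C C M N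
  let φ' := AlgebraTensorModule.cancelBaseChange A C C M' N
  have hcomm : (i.restrictScalars A).rTensor N ∘ φ = φ' ∘ i.rTensor (C ⊗[A] N) := by
    suffices h : AlgebraTensorModule.rTensor A N i ∘ₗ φ.toLinearMap =
        φ'.toLinearMap ∘ₗ i.rTensor (C ⊗[A] N) from congrArg DFunLike.coe h
    ext; simp [φ, φ']
  rw [LinearMap.lTensor_inj_iff_rTensor_inj]
  refine .of_comp_right (g := φ) ?_ φ.surjective
  rw [hcomm]
  exact φ'.injective.comp (Module.Flat.rTensor_preserves_injective_linearMap i hi)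

section
variable {A B : Type*} [CommRing A] [CommRing B] [Algebra A B]

/-- Multiplication by `x` as a map `(J : x) → J`. -/
def mulFromColon (x : A) (J : Ideal A) : J.colon {x} →ₗ[A] J :=
  (LinearMap.toSpanSingleton A A x).restrict fun _ => Submodule.mem_colon_singleton.mp

theorem exact_mulFromColon (x : A) (J : Ideal A) :
    Function.Exact (mulFromColon x J) (Algebra.idealMap (A ⧸ Ideal.span {x}) J) := by
  rintro ⟨j, hj⟩
  rw [← Subtype.coe_inj]
  change Ideal.Quotient.mk _ j = 0 ↔ _
  rw [Ideal.Quotient.eq_zero_iff_mem, Ideal.mem_span_singleton']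
  constructor
  · rintro ⟨a, rfl⟩
    exact ⟨⟨a, Submodule.mem_colon_singleton.mpr hj⟩, rfl⟩
  · rintro ⟨⟨a, _⟩, h⟩
    exact ⟨a, congrArg Subtype.val h⟩

theorem exists_lTensor_mulFromColon_eq {x : A} (hreg : IsSMulRegular B x)
    [Module.Flat (A ⧸ Ideal.span {x}) ((A ⧸ Ideal.span {x}) ⊗[A] B)] {J : Ideal A}
    {z : B ⊗[A] J} (hz : J.subtype.lTensor B z = 0) :
    ∃ w, (J.colon {x}).subtype.lTensor B w = 0 ∧ (mulFromColon x J).lTensor B w = z := by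
  let A' := A ⧸ Ideal.span {x}
  let ι := (J.map (algebraMap A A')).subtype
  have hι : Function.Injective ((ι.restrictScalars A).lTensor B) :=
    lTensor_injective_of_flat_baseChange ι (Submodule.injective_subtype _)
  have hcomp : ι.restrictScalars A ∘ₗ Algebra.idealMap A' J =
      Algebra.linearMap A A' ∘ₗ J.subtype := rfl
  have hz' : (Algebra.idealMap A' J).lTensor B z = 0 := by
    apply hι
    rw [← LinearMap.lTensor_comp_apply, hcomp, LinearMap.lTensor_comp_apply, hz, map_zero,
      map_zero]
  have hsurj : Function.Surjective (Algebra.idealMap A' J) := by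
    rintro ⟨_, h⟩
    obtain ⟨j, hj, rfl⟩ :=
      (Ideal.mem_map_iff_of_surjective _ Ideal.Quotient.mk_surjective).mp h
    exact ⟨⟨j, hj⟩, rfl⟩
  obtain ⟨w, rfl⟩ := (lTensor_exact B (exact_mulFromColon x J) hsurj z).mp hz'
  have hxw : x • (J.colon {x}).subtype.lTensor B w = 0 := by
    have hmul : J.subtype ∘ₗ mulFromColon x J = x • (J.colon {x}).subtype :=
      LinearMap.ext fun c => mul_comm (c : A) x
    rw [← LinearMap.smul_apply, ← LinearMap.lTensor_smul, ← hmul, LinearMap.lTensor_comp_apply, hz]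
  have hregA : IsSMulRegular (B ⊗[A] A) x :=
    (TensorProduct.rid A B).isSMulRegular_congr x |>.mpr hreg
  exact ⟨w, hregA (hxw.trans (smul_zero x).symm), rfl⟩

theorem flat_of_flat_quotient_span_singleton [IsNoetherianRing A] [IsNoetherianRing B] {x : A}
    (hx : algebraMap A B x ∈ (⊥ : Ideal B).jacobson) (hreg : IsSMulRegular B x)
    [Module.Flat (A ⧸ Ideal.span {x}) (B ⧸ (Ideal.span {x}).map (algebraMap A B))] :
    Module.Flat A B := by
  have : Module.Flat (A ⧸ Ideal.span {x}) ((A ⧸ Ideal.span {x}) ⊗[A] B) :=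
    .of_linearEquiv
      (Algebra.TensorProduct.quotIdealMapEquivQuotTensor B (Ideal.span {x})).symm.toLinearEquiv
  rw [Module.Flat.iff_lTensor_injective']
  intro J
  -- If `J < (J : x)`, a kernel element comes from one for `(J : x)`; if `J = (J : x)`, the kernel
  -- `K` of `B ⊗ J → B ⊗ A` satisfies `K = x K`, and Nakayama applies.
  induction J using IsNoetherian.induction with
  | hgt J ih =>
  rw [injective_iff_map_eq_zero]
  intro z hz
  have hle : J ≤ J.colon {x} := fun a h =>
    Submodule.mem_colon_singleton.mpr (Ideal.mul_mem_right x J h)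
  rcases hle.lt_or_eq with hlt | heq
  · obtain ⟨w, hw, rfl⟩ := exists_lTensor_mulFromColon_eq hreg hz
    rw [(injective_iff_map_eq_zero _).mp (ih _ hlt) w hw, map_zero]
  · let K : Submodule B (B ⊗[A] J) := LinearMap.ker (AlgebraTensorModule.lTensor B B J.subtype)
    suffices hK : K = ⊥ by
      rwa [← Submodule.mem_bot B, ← hK]
    refine Submodule.eq_bot_of_le_smul_of_le_jacobson_bot (Ideal.span {algebraMap A B x}) K
      (IsNoetherian.noetherian _) (fun y hy => ?_) ((Ideal.span_singleton_le_iff_mem _).mpr hx)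
    obtain ⟨w, hw, rfl⟩ := exists_lTensor_mulFromColon_eq hreg hy
    let κ : J.colon {x} ≃ₗ[A] J := LinearEquiv.ofEq _ _ heq.symm
    have hκ : mulFromColon x J = x • κ.toLinearMap :=
      LinearMap.ext fun c => Subtype.ext (mul_comm (c : A) x)
    rw [hκ, LinearMap.lTensor_smul, LinearMap.smul_apply, ← algebraMap_smul B x]
    refine Submodule.smul_mem_smul (Ideal.mem_span_singleton_self _) ?_
    change J.subtype.lTensor B (κ.toLinearMap.lTensor B w) = 0
    rw [← LinearMap.lTensor_comp_apply]
    exact hw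

end

theorem dvd_of_mk_pow_mul_eq_zero {B : Type*} [CommRing B] {y : B} (hy : IsSMulRegular B y)
    {i n : ℕ} (hi : i < n) {c : B ⧸ Ideal.span {y ^ n}} (hc : Ideal.Quotient.mk _ y ^ i * c = 0) :
    Ideal.Quotient.mk _ y ∣ c := by
  obtain ⟨b, rfl⟩ := Ideal.Quotient.mk_surjective c
  rw [← map_pow, ← map_mul, Ideal.Quotient.eq_zero_iff_dvd] at hc
  obtain ⟨d, hd⟩ := hc
  obtain ⟨k, rfl⟩ := Nat.exists_eq_add_of_lt hi
  have hb : b = y ^ (k + 1) * d := hy.pow i <| by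
    simpa only [smul_eq_mul, ← mul_assoc, ← pow_add, ← add_assoc] using hd
  exact map_dvd _ ⟨y ^ k * d, by rw [hb, pow_succ', mul_assoc]⟩

theorem flat_of_flat_quotientMap {A B : Type*} [CommRing A] [CommRing B] [IsNoetherianRing A]
    [IsNoetherianRing B] {φ : A →+* B} {x : A} {y : B} {n : ℕ} (hxy : φ x = y ^ n)
    (hx : φ x ∈ (⊥ : Ideal B).jacobson) (hy : IsSMulRegular B y)
    (hle : Ideal.span {x} ≤ (Ideal.span {y}).comap φ)
    (hflat : (Ideal.quotientMap (Ideal.span {y}) φ hle).Flat) : φ.Flat := by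
  let := φ.toAlgebra
  let I := (Ideal.span {x}).map (algebraMap A B)
  have hI : I = Ideal.span {y ^ n} := by
    rw [← hxy]
    exact (Ideal.map_span φ {x}).trans (by rw [Set.image_singleton])
  have hspan : Ideal.span {Ideal.Quotient.mk I y} = (Ideal.span {y}).map (Ideal.Quotient.mk I) := by
    rw [Ideal.map_span, Set.image_singleton]
  have : Module.Flat (A ⧸ Ideal.span {x}) ((B ⧸ I) ⧸ Ideal.span {Ideal.Quotient.mk I y}) := by
    let e := DoubleQuot.quotQuotEquivQuotOfLE (Ideal.map_le_iff_le_comap.mpr hle)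
    rw [hspan, ← RingHom.flat_algebraMap_iff,
      ← RingHom.Flat.comp_iff_of_bijective_left (g := e.toRingHom) e.bijective]
    convert hflat using 1
    exact Ideal.Quotient.ringHom_ext rfl
  have : Module.Flat (A ⧸ Ideal.span {x}) (B ⧸ I) := by
    refine flat_of_flat_quotient_of_pow_eq_zero (y := Ideal.Quotient.mk I y) (n := n) ?_ ?_
    · rw [← map_pow, Ideal.Quotient.eq_zero_iff_mem, hI]
      exact Ideal.mem_span_singleton_self _
    · intro i hi
      rw [hI]
      exact fun c => dvd_of_mk_pow_mul_eq_zero hy hi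
  have hreg : IsSMulRegular B x := fun b b' h => hy.pow n (hxy ▸ h)
  exact flat_of_flat_quotient_span_singleton (x := x) hx hreg

theorem charP_of_ringHom_of_prime {A B : Type*} [CommRing A] [CommRing B] [Nontrivial B]
    (p : ℕ) [Fact p.Prime] [CharP A p] (φ : A →+* B) : CharP B p := by
  rw [CharP.charP_iff_prime_eq_zero Fact.out, ← map_natCast φ, CharP.cast_eq_zero, map_zero]

theorem frobenius_flat_of_frobenius_quotient_flat {A : Type*} [CommRing A] [IsNoetherianRing A]
    (p : ℕ) [Fact p.Prime] [CharP A p] {x : A} [CharP (A ⧸ Ideal.span {x}) p]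
    (hx : x ∈ (⊥ : Ideal A).jacobson) (hreg : IsSMulRegular A x)
    (hflat : (frobenius (A ⧸ Ideal.span {x}) p).Flat) : (frobenius A p).Flat := by
  have hp : p ≠ 0 := NeZero.ne p
  have hle : Ideal.span {x} ≤ (Ideal.span {x}).comap (frobenius A p) := by
    rw [Ideal.span_singleton_le_iff_mem, Ideal.mem_comap, frobenius_def]
    exact Ideal.pow_mem_of_mem _ (Ideal.mem_span_singleton_self x) _ (Nat.pos_of_ne_zero hp)
  refine flat_of_flat_quotientMap (frobenius_def p x) ?_ hreg hle ?_
  · exact Ideal.pow_mem_of_mem _ hx _ (Nat.pos_of_ne_zero hp)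
  · convert hflat using 1
    exact Ideal.Quotient.ringHom_ext (RingHom.ext fun a => by simp [frobenius_def])

theorem exists_mem_maximalIdeal_notMem_sq_notMem_minimalPrimes {A : Type*} [CommRing A]
    [IsLocalRing A] [IsNoetherianRing A] (hdim : ringKrullDim A ≠ 0) :
    ∃ x ∈ maximalIdeal A, x ∉ maximalIdeal A ^ 2 ∧ ∀ q ∈ minimalPrimes A, x ∉ q := by
  by_contra! hx
  have hcover : (maximalIdeal A : Set A) ⊆
      ⋃ I ∈ insert (maximalIdeal A ^ 2) (minimalPrimes A), (I : Set A) := by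
    intro x hxm
    by_cases hx2 : x ∈ maximalIdeal A ^ 2
    · exact Set.mem_biUnion (Set.mem_insert _ _) hx2
    · obtain ⟨q, hq, hxq⟩ := hx x hxm hx2
      exact Set.mem_biUnion (Set.mem_insert_of_mem _ hq) hxq
  have hfin := (minimalPrimes.finite_of_isNoetherianRing A).insert (maximalIdeal A ^ 2)
  obtain ⟨I, rfl | hI, hle⟩ := (Ideal.subset_union_prime_finite (f := id) hfin (maximalIdeal A ^ 2)
    (maximalIdeal A ^ 2) fun I hI h2 _ => (hI.resolve_left h2).1.1).mp hcover
  · have hbot : maximalIdeal A = ⊥ :=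
      Submodule.eq_bot_of_le_smul_of_le_jacobson_bot (maximalIdeal A) _ (IsNoetherian.noetherian _)
        (by rwa [smul_eq_mul, ← pow_two]) (jacobson_eq_maximalIdeal _ bot_ne_top).ge
    exact hdim (ringKrullDim_eq_zero_of_isField (isField_iff_maximalIdeal_eq.mpr hbot))
  · have hprime : I.IsPrime := hI.1.1
    have hIm : maximalIdeal A = I := hle.antisymm (le_maximalIdeal hprime.ne_top)
    apply hdim
    rw [← maximalIdeal_height_eq_ringKrullDim, hIm, Ideal.height_eq_zero_iff.mpr hI]
    rfl

theorem exists_span_insert_eq_maximalIdeal {A : Type*} [CommRing A] [IsLocalRing A]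
    (hfg : (maximalIdeal A).FG) {x : A} (hx : x ∈ maximalIdeal A) (hx2 : x ∉ maximalIdeal A ^ 2) :
    ∃ s : Finset A, s.card + 1 = (maximalIdeal A).spanFinrank ∧
      Ideal.span (insert x (s : Set A)) = maximalIdeal A := by
  classical
  obtain ⟨t, hcard, ht⟩ := Submodule.FG.exists_span_finset_card_eq_spanFinrank hfg
  have htm (g) (hg : g ∈ t) : g ∈ maximalIdeal A := ht ▸ Submodule.subset_span hg
  obtain ⟨a, -, ha⟩ := Submodule.mem_span_finset.mp (ht ▸ hx)
  obtain ⟨g, hg, hag⟩ : ∃ g ∈ t, a g ∉ maximalIdeal A := by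
    by_contra! hc
    refine hx2 (ha ▸ pow_two (maximalIdeal A) ▸ ?_)
    exact Ideal.sum_mem _ fun g hg => Ideal.mul_mem_mul (hc g hg) (htm g hg)
  have hunit : IsUnit (a g) := by simpa using hag
  refine ⟨t.erase g, by rw [Finset.card_erase_add_one hg, hcard], le_antisymm ?_ ?_⟩
  · refine Ideal.span_le.mpr (Set.insert_subset hx fun h hh => htm h (Finset.mem_of_mem_erase hh))
  · have hmem : ∀ h ∈ t.erase g, h ∈ Ideal.span (insert x (t.erase g : Set A)) := fun h hh =>
      Ideal.subset_span (Set.mem_insert_of_mem _ hh)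
    refine ht.symm.trans_le (Ideal.span_le.mpr fun h hh => ?_)
    by_cases hhg : h = g
    · subst hhg
      have hsum : a h * h = x - ∑ i ∈ t.erase h, a i * i := by
        rw [← ha, ← Finset.add_sum_erase t _ hh]; simp
      rw [SetLike.mem_coe, ← Ideal.unit_mul_mem_iff_mem _ hunit, hsum]
      exact sub_mem (Ideal.subset_span (Set.mem_insert _ _))
        (Ideal.sum_mem _ fun i hi => Ideal.mul_mem_left _ _ (hmem i hi))
    · exact hmem h (Finset.mem_erase.mpr ⟨hhg, hh⟩)

theorem spanFinrank_maximalIdeal_quotient_lt {A : Type*} [CommRing A] [IsLocalRing A]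
    (hfg : (maximalIdeal A).FG) {x : A} [IsLocalRing (A ⧸ Ideal.span {x})]
    (hx : x ∈ maximalIdeal A) (hx2 : x ∉ maximalIdeal A ^ 2) :
    (maximalIdeal (A ⧸ Ideal.span {x})).spanFinrank < (maximalIdeal A).spanFinrank := by
  obtain ⟨s, hcard, hs⟩ := exists_span_insert_eq_maximalIdeal hfg hx hx2
  let π := Ideal.Quotient.mk (Ideal.span {x})
  have hspan : maximalIdeal (A ⧸ Ideal.span {x}) = Ideal.span (π '' s) := by
    have hπx : π x = 0 := Ideal.Quotient.mk_singleton_self x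
    rw [← map_maximalIdeal_of_surjective π Ideal.Quotient.mk_surjective, ← hs, Ideal.map_span,
      Set.image_insert_eq, hπx, Ideal.span_insert_zero]
  rw [← hcard, Nat.lt_succ_iff, hspan, ← Set.ncard_coe_finset]
  exact (Submodule.spanFinrank_span_le_ncard_of_finite (s.finite_toSet.image π)).trans
    (Set.ncard_image_le s.finite_toSet)

theorem isRegularLocalRing_quotient_span_singleton {A : Type*} [CommRing A] [IsRegularLocalRing A]
    {x : A} (hx : x ∈ maximalIdeal A) (hx2 : x ∉ maximalIdeal A ^ 2) :
    IsRegularLocalRing (A ⧸ Ideal.span {x}) := by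
  have : Nontrivial (A ⧸ Ideal.span {x}) :=
    Ideal.Quotient.nontrivial_iff.mpr (Ideal.span_singleton_ne_top hx)
  have : IsLocalRing (A ⧸ Ideal.span {x}) := .of_surjective' _ Ideal.Quotient.mk_surjective
  refine .of_spanFinrank_maximalIdeal_le _ ?_
  have hlt := spanFinrank_maximalIdeal_quotient_lt (IsNoetherian.noetherian _) hx hx2
  have hdim : ringKrullDim A ≤ ringKrullDim (A ⧸ Ideal.span {x}) + 1 := by
    simpa using ringKrullDim_le_ringKrullDim_quotient_add_encard {x}
      (by simpa [ringJacobson_eq_maximalIdeal] using hx)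
  rw [← (isRegularLocalRing_iff A).mp inferInstance] at hdim
  rw [← ENat.WithBot.add_le_add_one_right_iff]
  exact le_trans (mod_cast hlt) hdim

theorem isDomain_of_isDomain_quotient_span_singleton {A : Type*} [CommRing A] [IsNoetherianRing A]
    {x : A} [IsDomain (A ⧸ Ideal.span {x})] (hx : x ∈ (⊥ : Ideal A).jacobson)
    (hmin : ∀ q ∈ minimalPrimes A, x ∉ q) : IsDomain A := by
  have hprime : (Ideal.span {x}).IsPrime := (Ideal.Quotient.isDomain_iff_prime _).mp inferInstance
  obtain ⟨q, hq, hqx⟩ := Ideal.exists_minimalPrimes_le (bot_le (a := Ideal.span {x}))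
  have hqp : q.IsPrime := hq.1.1
  have hqq : q ≤ Ideal.span {x} • q := fun y hy => by
    obtain ⟨z, rfl⟩ := Ideal.mem_span_singleton.mp (hqx hy)
    exact Ideal.mul_mem_mul (Ideal.mem_span_singleton_self x)
      ((hqp.mem_or_mem hy).resolve_left (hmin q hq))
  have hbot : q = ⊥ := Submodule.eq_bot_of_le_smul_of_le_jacobson_bot _ q
    (IsNoetherian.noetherian _) hqq ((Ideal.span_singleton_le_iff_mem _).mpr hx)
  subst hbot
  exact .of_bot_isPrime A

theorem regularLocalRing_induction {P : ∀ (A : Type u) [CommRing A] [IsRegularLocalRing A], Prop}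
    (isField : ∀ (A : Type u) [CommRing A] [IsRegularLocalRing A], IsField A → P A)
    (quotient : ∀ (A : Type u) [CommRing A] [IsRegularLocalRing A] (x : A)
      [IsRegularLocalRing (A ⧸ Ideal.span {x})], x ∈ maximalIdeal A →
      (∀ q ∈ minimalPrimes A, x ∉ q) → P (A ⧸ Ideal.span {x}) → P A)
    (A : Type u) [CommRing A] [IsRegularLocalRing A] : P A := by
  induction hn : (maximalIdeal A).spanFinrank using Nat.strong_induction_on generalizing A with
  | _ n ih =>
  subst hn
  have hfg : (maximalIdeal A).FG := IsNoetherian.noetherian _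
  by_cases hbot : maximalIdeal A = ⊥
  · exact isField A (isField_iff_maximalIdeal_eq.mpr hbot)
  · have hdim : ringKrullDim A ≠ 0 := by
      rw [← (isRegularLocalRing_iff A).mp inferInstance]
      exact_mod_cast (Submodule.spanFinrank_eq_zero_iff_eq_bot hfg).not.mpr hbot
    obtain ⟨x, hx, hx2, hmin⟩ := exists_mem_maximalIdeal_notMem_sq_notMem_minimalPrimes hdim
    have := isRegularLocalRing_quotient_span_singleton hx hx2
    exact quotient A x hx hmin
      (ih _ (spanFinrank_maximalIdeal_quotient_lt hfg hx hx2) (A ⧸ Ideal.span {x}) rfl)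

theorem isDomain_of_isRegularLocalRing (A : Type u) [CommRing A] [IsRegularLocalRing A] :
    IsDomain A :=
  regularLocalRing_induction (P := fun A _ _ => IsDomain A) (fun _ _ _ hA => hA.isDomain)
    (fun _ _ _ _ _ hx hmin _ => isDomain_of_isDomain_quotient_span_singleton
      ((jacobson_eq_maximalIdeal _ bot_ne_top).ge hx) hmin) A

theorem frobenius_flat_of_isRegularLocalRing (p : ℕ) [Fact p.Prime] (A : Type u) [CommRing A]
    [IsRegularLocalRing A] [CharP A p] : (frobenius A p).Flat := by
  refine regularLocalRing_induction (P := fun A _ _ => ∀ [CharP A p], (frobenius A p).Flat)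
    (fun A _ _ hA _ => .of_isField hA _) (fun A _ _ x _ hx hmin ih _ => ?_) A
  have := isDomain_of_isRegularLocalRing A
  have := charP_of_ringHom_of_prime p (Ideal.Quotient.mk (Ideal.span {x}))
  have hx0 : x ≠ 0 := by
    rintro rfl
    exact hmin ⊥ (IsDomain.minimalPrimes_eq_singleton_bot A ▸ rfl) (zero_mem _)
  exact frobenius_flat_of_frobenius_quotient_flat p
    ((jacobson_eq_maximalIdeal _ bot_ne_top).ge hx) (IsSMulRegular.of_ne_zero hx0) ih

theorem flat_of_forall_isMaximal_flat_comp_algebraMap {R S : Type*} [CommRing R] [CommRing S]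
    (φ : R →+* S) (h : ∀ (P : Ideal S) [P.IsMaximal],
      ((algebraMap S (Localization.AtPrime P)).comp φ).Flat) : φ.Flat := by
  let := φ.toAlgebra
  refine Module.flat_of_isLocalized_maximal S S (fun P => Localization.AtPrime P)
    (fun P => Algebra.linearMap S _) fun P _ => ?_
  rw [← RingHom.flat_algebraMap_iff]
  exact h P

theorem frobenius_flat_of_isRegularRing (p : ℕ) [Fact p.Prime] (R : Type*) [CommRing R]
    [IsRegularRing R] [CharP R p] : (frobenius R p).Flat := by
  refine flat_of_forall_isMaximal_flat_comp_algebraMap _ fun P _ => ?_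
  have := charP_of_ringHom_of_prime p (algebraMap R (Localization.AtPrime P))
  rw [RingHom.frobenius_comm]
  refine .comp ?_ (frobenius_flat_of_isRegularLocalRing p (Localization.AtPrime P))
  rw [RingHom.flat_algebraMap_iff]
  exact IsLocalization.flat _ P.primeCompl

theorem isRegularRing_of_isRegularRingStmt {R : Type u} [CommRing R] (hR : IsRegularRingStmt R) :
    IsRegularRing R := by
  have := hR.1
  refine isRegularRing_iff.mpr fun P _ => ?_
  have := IsLocalization.isNoetherianRing P.primeCompl (Localization.AtPrime P) ‹_›
  exact (IsRegularLocalRing.iff_finrank_cotangentSpace _).mpr (hR.2 P).symm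

/-- The zeroth cohomology of the Koszul cocomplex of the family `f` on `N`: the submodule of
elements annihilated by every `f j`. -/
def koszulH0 {R ι : Type*} [CommRing R] (f : ι → R) (N : Type*) [AddCommGroup N] [Module R N] :
    Submodule R N :=
  ⨅ j, LinearMap.ker (LinearMap.lsmul R N (f j))

theorem mem_koszulH0 {R ι N : Type*} [CommRing R] [AddCommGroup N] [Module R N] {f : ι → R}
    {x : N} : x ∈ koszulH0 f N ↔ ∀ j, f j • x = 0 := by
  simp [koszulH0]

theorem algebraMap_mem_annihilator_koszulH0_tensorProduct {A B M ι : Type*} [CommRing A]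
    [CommRing B] [Algebra A B] [Module.Flat A B] [AddCommGroup M] [Module A M] [Finite ι]
    {f : ι → A} {s : A} (hs : s ∈ (koszulH0 f M).annihilator) :
    algebraMap A B s ∈ (koszulH0 (algebraMap A B ∘ f) (B ⊗[A] M)).annihilator := by
  classical
  have := Fintype.ofFinite ι
  let θ : M →ₗ[A] ι → M := LinearMap.pi fun j => LinearMap.lsmul A M (f j)
  have hexact : Function.Exact (koszulH0 f M).subtype θ := by
    rw [koszulH0, ← LinearMap.ker_pi]
    exact LinearMap.exact_subtype_ker_map θ
  have hθ (w : B ⊗[A] M) (j : ι) :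
      TensorProduct.piRight A A B (fun _ => M) (θ.lTensor B w) j = algebraMap A B (f j) • w := by
    induction w with
    | zero => simp only [map_zero, Pi.zero_apply, smul_zero]
    | tmul b m => simp [θ]
    | add w w' hw hw' => simp only [map_add, Pi.add_apply, smul_add, hw, hw']
  rw [Submodule.mem_annihilator]
  intro z hz
  have hθz : θ.lTensor B z = 0 := by
    apply (TensorProduct.piRight A A B fun _ => M).injective
    ext j
    rw [hθ, map_zero]
    exact mem_koszulH0.mp hz j
  obtain ⟨y, rfl⟩ := (Module.Flat.lTensor_exact B hexact z).mp hθz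
  have hsy : s • (koszulH0 f M).subtype = 0 :=
    LinearMap.ext fun m => Submodule.mem_annihilator.mp hs m m.2
  rw [algebraMap_smul, ← LinearMap.smul_apply, ← LinearMap.lTensor_smul, hsy,
    LinearMap.lTensor_zero, LinearMap.zero_apply]

theorem map_mem_annihilator_koszulH0_extendScalars {R S : Type u} [CommRing R] [CommRing S]
    {φ : R →+* S} (hφ : φ.Flat) {ι : Type*} [Finite ι] {M : ModuleCat R} {f : ι → R} {s : R}
    (hs : s ∈ (koszulH0 f M).annihilator) :
    φ s ∈ (koszulH0 (φ ∘ f) ((ModuleCat.extendScalars φ).obj M)).annihilator := by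
  let := φ.toAlgebra
  have : Module.Flat R S := hφ
  exact algebraMap_mem_annihilator_koszulH0_tensorProduct (B := S) hs

theorem extendScalars_map_injective {R S : Type u} [CommRing R] [CommRing S]
    {φ : R →+* S} (hφ : φ.Flat) {M N : ModuleCat R} {β : M ⟶ N} (hβ : Function.Injective β) :
    Function.Injective ((ModuleCat.extendScalars φ).map β) := by
  let := φ.toAlgebra
  have : Module.Flat R S := hφ
  exact Module.Flat.lTensor_preserves_injective_linearMap (M := S) β.hom hβ

theorem koszulH0_le_koszulH0_pow {R ι N : Type*} [CommRing R] [AddCommGroup N] [Module R N]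
    (f : ι → R) {n : ℕ} (hn : n ≠ 0) : koszulH0 f N ≤ koszulH0 (f ^ n) N := by
  intro x hx
  obtain ⟨m, rfl⟩ := Nat.exists_eq_succ_of_ne_zero hn
  rw [mem_koszulH0] at hx ⊢
  intro j
  rw [Pi.pow_apply, pow_succ, mul_smul, hx, smul_zero]

section
variable {R : Type} [CommRing R] {p : ℕ} [Fact p.Prime] [CharP R p]

theorem Fpow_map_injective (hF : (frobenius R p).Flat) (e : ℕ) {M N : ModuleCat R} {β : M ⟶ N}
    (hβ : Function.Injective β) : Function.Injective ((Fpow R p e).map β) := by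
  induction e generalizing M N with
  | zero => exact hβ
  | succ _ ih => exact ih (extendScalars_map_injective hF hβ)

theorem pow_mem_annihilator_koszulH0_Fpow (hF : (frobenius R p).Flat) {ι : Type*} [Finite ι]
    (f : ι → R) (e : ℕ) {M : ModuleCat R} {s : R} (hs : s ∈ (koszulH0 f M).annihilator) :
    s ^ p ^ e ∈ (koszulH0 f ((Fpow R p e).obj M)).annihilator := by
  induction e generalizing M s with
  | zero => rwa [pow_zero, pow_one]
  | succ e ih =>
    rw [pow_succ', pow_mul]
    exact ih <| Submodule.annihilator_mono (koszulH0_le_koszulH0_pow f (NeZero.ne p))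
      (map_mem_annihilator_koszulH0_extendScalars hF hs)

end

theorem mono_ofSequence_map {C : Type*} [Category* C] {X : ℕ → C} (g : ∀ n, X n ⟶ X (n + 1))
    (hg : ∀ n, Mono (g n)) {i j : ℕ} (h : i ⟶ j) : Mono ((Functor.ofSequence g).map h) := by
  obtain ⟨k, rfl⟩ := Nat.exists_eq_add_of_le (leOfHom h)
  induction k with
  | zero =>
    rw [Subsingleton.elim h (𝟙 i), CategoryTheory.Functor.map_id]
    infer_instance
  | succ k ih =>
    rw [Subsingleton.elim h (homOfLE (i.le_add_right k) ≫ homOfLE (i + k).le_succ),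
      Functor.map_comp, Functor.ofSequence_map_homOfLE_succ]
    exact mono_comp' (ih _) (hg _)

theorem mono_colimit_ι_ofSequence {C : Type*} [Category* C]
    [Limits.HasFilteredColimitsOfSize.{0, 0} C] [AB5OfSize.{0, 0} C] {X : ℕ → C}
    (g : ∀ n, X n ⟶ X (n + 1)) (hg : ∀ n, Mono (g n)) (i : ℕ) :
    Mono (Limits.colimit.ι (Functor.ofSequence g) i) := by
  have (i j : ℕ) (h : i ⟶ j) := mono_ofSequence_map g hg h
  exact (Limits.colimit.isColimit _).mono_ι_app_of_isFiltered i

theorem support_subset_of_forall_exists_pow_smul_eq_zero {R M N : Type*} [CommRing R]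
    [AddCommGroup M] [Module R M] [Module.Finite R M] [AddCommGroup N] [Module R N]
    (h : ∀ s ∈ Module.annihilator R M, ∀ z : N, ∃ n, s ^ n • z = 0) :
    Module.support R N ⊆ Module.support R M := by
  intro P hP
  rw [Module.support_eq_zeroLocus, PrimeSpectrum.mem_zeroLocus]
  intro s hs
  by_contra hsP
  obtain ⟨z, hz⟩ := Module.mem_support_iff'.mp hP
  obtain ⟨n, hn⟩ := h s hs z
  exact hz (s ^ n) (fun hmem => hsP (P.isPrime.mem_of_pow_mem n hmem)) hn

section
variable {R : Type} [CommRing R] {p : ℕ} [Fact p.Prime] [CharP R p] {M : ModuleCat R}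
  (β : M ⟶ (ModuleCat.extendScalars (frobenius R p)).obj M)

/-- The `F`-module `M_∞ = colim (M → F(M) → F²(M) → ⋯)` generated by `β : M → F(M)`. -/
noncomputable abbrev generatedFModule : ModuleCat R :=
  Limits.colimit (Functor.ofSequence fun e => (Fpow R p e).map β)

/-- The canonical map `F^e(M) → M_∞`. -/
noncomputable def toGeneratedFModule (e : ℕ) : (Fpow R p e).obj M →ₗ[R] generatedFModule β :=
  (Limits.colimit.ι (Functor.ofSequence fun e => (Fpow R p e).map β) e).hom

theorem exists_toGeneratedFModule_eq (z : generatedFModule β) :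
    ∃ e w, toGeneratedFModule β e w = z :=
  Limits.Concrete.colimit_exists_rep _ z

variable {β}

theorem toGeneratedFModule_injective (hF : (frobenius R p).Flat) (hβ : Function.Injective β)
    (e : ℕ) : Function.Injective (toGeneratedFModule β e) := by
  have hmono (e : ℕ) : Mono ((Fpow R p e).map β) :=
    (ModuleCat.mono_iff_injective _).mpr (Fpow_map_injective hF e hβ)
  exact (ModuleCat.mono_iff_injective _).mp (mono_colimit_ι_ofSequence _ hmono e)

theorem toGeneratedFModule_mem_koszulH0_iff (hF : (frobenius R p).Flat)
    (hβ : Function.Injective β) {ι : Type*} (f : ι → R) {e : ℕ} {w : (Fpow R p e).obj M} :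
    toGeneratedFModule β e w ∈ koszulH0 f (generatedFModule β) ↔ w ∈ koszulH0 f _ := by
  simp only [mem_koszulH0, ← map_smul]
  exact forall_congr' fun _ =>
    map_eq_zero_iff (toGeneratedFModule β e) (toGeneratedFModule_injective hF hβ e)

theorem support_koszulH0_generatedFModule [IsNoetherian R M]
    (hF : (frobenius R p).Flat) (hβ : Function.Injective β) {ι : Type*} [Finite ι] (f : ι → R) :
    Module.support R (koszulH0 f (generatedFModule β)) = Module.support R (koszulH0 f M) := by
  apply subset_antisymm
  · refine support_subset_of_forall_exists_pow_smul_eq_zero fun s hs ⟨z, hz⟩ => ?_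
    obtain ⟨e, w, rfl⟩ := exists_toGeneratedFModule_eq β z
    have hw : s ^ p ^ e • w = 0 :=
      Submodule.mem_annihilator.mp (pow_mem_annihilator_koszulH0_Fpow hF f e hs) w
        ((toGeneratedFModule_mem_koszulH0_iff hF hβ f).mp hz)
    refine ⟨p ^ e, Subtype.ext ?_⟩
    rw [Submodule.coe_smul, ← map_smul, hw, map_zero, Submodule.coe_zero]
  · exact Module.support_subset_of_injective
      ((toGeneratedFModule β 0).restrict fun _ =>
        (toGeneratedFModule_mem_koszulH0_iff (e := 0) hF hβ f).mpr)
      fun _ _ h => Subtype.ext (toGeneratedFModule_injective hF hβ 0 (congrArg Subtype.val h))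

end

/-- For an `F`-finite `F`-module `M_∞ = colim (M →β→ F(M) →F(β)→ F²(M) → ⋯)` over a
noetherian regular ring of prime characteristic `p` (with `M` finitely generated and `β`
injective) and elements `f1, …, fc ∈ R`, the support of
`H^0(K^•(f1,…,fc; M_∞)) = ∩ⱼ ker(fⱼ : M_∞ → M_∞)` is Zariski-closed. -/
theorem stmt_5 {R : Type} [CommRing R] (p : ℕ) [Fact p.Prime] [CharP R p]
    (hreg : IsRegularRingStmt R)
    (M : ModuleCat R) [Module.Finite R M]
    (β : M ⟶ (ModuleCat.extendScalars (frobenius R p)).obj M)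
    (hβ : Function.Injective β)
    (c : ℕ) (f : Fin c → R) :
    IsClosed (Module.support R
      ↥(⨅ j : Fin c, LinearMap.ker
        ((LinearMap.lsmul R
          ↥(Limits.colimit (Functor.ofSequence (fun e => (Fpow R p e).map β)))) (f j)))) := by
  have := hreg.1
  have := isRegularRing_of_isRegularRingStmt hreg
  have hF : (frobenius R p).Flat := frobenius_flat_of_isRegularRing p R
  change IsClosed (Module.support R (koszulH0 f (generatedFModule β)))
  rw [support_koszulH0_generatedFModule hF hβ]
  exact Module.isClosed_support
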